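/- Let n ≥ 3, let U ⊆ ℝⁿ be open, and let X¹, X² be the vector fields on U given by X¹(z) = (z₂, z₃, …, z_{n−1}, 0, 1) and X²(z) = e_{n−1} (the (n−1)-st standard basis vector). Let (F_k) and (G_k) be the Lie and derived flags of Δ = span_{C^∞(U)}{X¹, X²}. Then, for every 0 ≤ k ≤ n−2, F_k = G_k = span_{C^∞(U)}{X¹, E_{n−1}, E_{n−2}, …, E_{n−1−k}} (where E_j is the constant vector field with value e_j), and for every q ∈ U the vectors X¹(q), e_{n−1}, …, e_{n−1−k} are linearly independent, so that dim F_k(q) = dim G_k(q) = 2 + k. -/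

import Mathlib

noncomputable section

/-- A vector field on (an open subset of) `ℝⁿ`, represented as a total map. -/
abbrev VF (n : ℕ) := (Fin n → ℝ) → (Fin n → ℝ)

/-- Lie bracket `[X,Y](x) = DY(x)(X(x)) − DX(x)(Y(x))`. -/
def lieBracket {n : ℕ} (X Y : VF n) : VF n :=
  fun x => fderiv ℝ Y x (X x) - fderiv ℝ X x (Y x)

/-- Span over `C^∞(U)` of a set of vector fields (membership only constrains values on `U`). -/
def spanOn {n : ℕ} (U : Set (Fin n → ℝ)) (S : Set (VF n)) : Set (VF n) :=
  { X | ∃ (m : ℕ) (c : Fin m → (Fin n → ℝ) → ℝ) (Y : Fin m → VF n),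
      (∀ i, ContDiffOn ℝ (⊤ : ℕ∞) (c i) U) ∧ (∀ i, Y i ∈ S) ∧
      ∀ x ∈ U, X x = ∑ i, c i x • Y i x }

/-- Sum of two distributions (as equality of values on `U`). -/
def addOn {n : ℕ} (U : Set (Fin n → ℝ)) (A B : Set (VF n)) : Set (VF n) :=
  { X | ∃ Y ∈ A, ∃ Z ∈ B, ∀ x ∈ U, X x = Y x + Z x }

/-- The set of brackets `[X,Y]`, `X ∈ A`, `Y ∈ B`. -/
def bracketSet {n : ℕ} (A B : Set (VF n)) : Set (VF n) :=
  { Z | ∃ X ∈ A, ∃ Y ∈ B, Z = lieBracket X Y }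

/-- The Lie flag: `F₀ = Δ`, `F_{k+1} = F_k + span_{C^∞(U)}{[X,Y] : X ∈ F_k, Y ∈ F₀}`. -/
def lieFlag {n : ℕ} (U : Set (Fin n → ℝ)) (Δ : Set (VF n)) : ℕ → Set (VF n)
  | 0 => Δ
  | k + 1 => addOn U (lieFlag U Δ k) (spanOn U (bracketSet (lieFlag U Δ k) Δ))

/-- The derived flag: `G₀ = Δ`, `G_{k+1} = G_k + span_{C^∞(U)}{[X,Y] : X, Y ∈ G_k}`. -/
def derivedFlag {n : ℕ} (U : Set (Fin n → ℝ)) (Δ : Set (VF n)) : ℕ → Set (VF n)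
  | 0 => Δ
  | k + 1 => addOn U (derivedFlag U Δ k)
      (spanOn U (bracketSet (derivedFlag U Δ k) (derivedFlag U Δ k)))

end

noncomputable section

/-- The chained-form vector field `X¹(z) = (z₂, z₃, …, z_{n−1}, 0, 1)`. -/
def chainedX1 (n : ℕ) : VF n :=
  fun z j => if h : j.1 + 3 ≤ n then z ⟨j.1 + 1, by omega⟩
             else if j.1 + 1 = n then 1 else 0

/-- The constant vector field with value `e_j`. -/
def constE (n : ℕ) (j : Fin n) : VF n := fun _ => Pi.single j (1 : ℝ)

/-!
If `T ⊆ S` are sets of smooth fields, then by bilinearity and the Leibniz rule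
`[f X, Y] = f [X, Y] - (Df · Y) X` the span of `S` together with all brackets of the spans of `S`
and `T` is generated by `S` and the brackets of the generators alone. For the chained form these
brackets are `[E_i, E_j] = 0` and `[E_{j+1}, X¹] = E_j`, so each step of either flag adds exactly
one constant field until `E_1` is reached. Independence of `X¹` from the constant fields is visible
in the last coordinate, which is `1` on `X¹` and `0` on `E_1, …, E_{n-1}`.
-/

section SpanOn

variable {n : ℕ} {U : Set (Fin n → ℝ)} {S T : Set (VF n)} {X Y : VF n}

theorem mem_spanOn_of_eq_sum {ι : Type*} [Fintype ι] {c : ι → (Fin n → ℝ) → ℝ} {Y : ι → VF n}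
    (hc : ∀ i, ContDiffOn ℝ (⊤ : ℕ∞) (c i) U) (hY : ∀ i, Y i ∈ S)
    (hX : ∀ x ∈ U, X x = ∑ i, c i x • Y i x) : X ∈ spanOn U S := by
  let e := (Fintype.equivFin ι).symm
  refine ⟨Fintype.card ι, c ∘ e, Y ∘ e, fun i => hc (e i), fun i => hY (e i), fun x hx => ?_⟩
  rw [hX x hx]
  exact (e.sum_comp fun i => c i x • Y i x).symm

theorem mem_spanOn_of_eqOn (hXY : Set.EqOn X Y U) (hX : X ∈ spanOn U S) : Y ∈ spanOn U S := by
  obtain ⟨m, c, Z, hc, hZ, h⟩ := hX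
  exact ⟨m, c, Z, hc, hZ, fun x hx => (hXY hx).symm.trans (h x hx)⟩

theorem smul_mem_spanOn {f : (Fin n → ℝ) → ℝ} (hf : ContDiffOn ℝ (⊤ : ℕ∞) f U)
    (hX : X ∈ spanOn U S) : (fun x => f x • X x) ∈ spanOn U S := by
  obtain ⟨m, c, Y, hc, hY, h⟩ := hX
  refine ⟨m, fun i x => f x * c i x, Y, fun i => hf.mul (hc i), hY, fun x hx => ?_⟩
  simp only [h x hx, Finset.smul_sum, mul_smul]

theorem subset_spanOn : S ⊆ spanOn U S := fun X hX =>
  mem_spanOn_of_eq_sum (c := fun _ : Unit => 1) (Y := fun _ => X)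
    (fun _ => contDiffOn_const) (fun _ => hX) (by simp)

theorem zero_mem_spanOn : (0 : VF n) ∈ spanOn U S :=
  ⟨0, Fin.elim0, Fin.elim0, Fin.rec0, Fin.rec0, by simp⟩

theorem add_mem_spanOn (hX : X ∈ spanOn U S) (hY : Y ∈ spanOn U S) : X + Y ∈ spanOn U S := by
  obtain ⟨m, c, V, hc, hV, hXc⟩ := hX
  obtain ⟨l, d, W, hd, hW, hYd⟩ := hY
  refine mem_spanOn_of_eq_sum (c := Sum.elim c d) (Y := Sum.elim V W)
    (Sum.rec hc hd) (Sum.rec hV hW) fun x hx => ?_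
  simp [hXc x hx, hYd x hx]

theorem neg_mem_spanOn (hX : X ∈ spanOn U S) : -X ∈ spanOn U S :=
  mem_spanOn_of_eqOn (fun x _ => by simp)
    (smul_mem_spanOn (f := fun _ => -1) contDiffOn_const hX)

theorem spanOn_induction {p : VF n → Prop}
    (congr : ∀ {X Y : VF n}, Set.EqOn X Y U → p X → p Y) (zero : p 0)
    (add : ∀ X Y, p X → p Y → p (X + Y))
    (smul : ∀ (f : (Fin n → ℝ) → ℝ), ContDiffOn ℝ (⊤ : ℕ∞) f U → ∀ X ∈ S, p fun x => f x • X x)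
    (hX : X ∈ spanOn U S) : p X := by
  obtain ⟨m, c, Y, hc, hY, h⟩ := hX
  refine congr (X := ∑ i, fun x => c i x • Y i x) (fun x hx => ?_)
    (Finset.sum_induction _ p add zero fun i _ => smul (c i) (hc i) (Y i) (hY i))
  rw [h x hx, Finset.sum_apply]

theorem spanOn_subset_spanOn (h : S ⊆ spanOn U T) : spanOn U S ⊆ spanOn U T := fun _ hX =>
  spanOn_induction mem_spanOn_of_eqOn zero_mem_spanOn (fun _ _ => add_mem_spanOn)
    (fun _ hf _ hY => smul_mem_spanOn hf (h hY)) hX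

theorem spanOn_mono (h : S ⊆ T) : spanOn U S ⊆ spanOn U T :=
  spanOn_subset_spanOn (h.trans subset_spanOn)

theorem contDiffOn_of_mem_spanOn (hS : ∀ X ∈ S, ContDiffOn ℝ (⊤ : ℕ∞) X U)
    (hX : X ∈ spanOn U S) : ContDiffOn ℝ (⊤ : ℕ∞) X U :=
  spanOn_induction (p := (ContDiffOn ℝ (⊤ : ℕ∞) · U)) (fun h hX => hX.congr h.symm) contDiffOn_const
    (fun _ _ => ContDiffOn.add) (fun _ hf Y hY => hf.smul (hS Y hY)) hX

theorem addOn_spanOn : addOn U (spanOn U S) (spanOn U T) = spanOn U (S ∪ T) := by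
  apply Set.Subset.antisymm
  · rintro X ⟨Y, hY, Z, hZ, hX⟩
    exact mem_spanOn_of_eqOn (fun x hx => (hX x hx).symm) <|
      add_mem_spanOn (spanOn_mono Set.subset_union_left hY)
        (spanOn_mono Set.subset_union_right hZ)
  · rintro X ⟨m, c, Y, hc, hY, hX⟩
    classical
    refine ⟨fun x => ∑ i : {i // Y i ∈ S}, c i x • Y i x, ?_,
      fun x => ∑ i : {i // Y i ∉ S}, c i x • Y i x, ?_, fun x hx => ?_⟩
    · exact mem_spanOn_of_eq_sum (c := fun i : {i // Y i ∈ S} => c i) (Y := fun i => Y i)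
        (fun i => hc i) (fun i => i.2) fun _ _ => rfl
    · exact mem_spanOn_of_eq_sum (c := fun i : {i // Y i ∉ S} => c i) (Y := fun i => Y i)
        (fun i => hc i) (fun i => (hY i).resolve_left i.2) fun _ _ => rfl
    · rw [hX x hx, Fintype.sum_subtype_add_sum_subtype (fun i => Y i ∈ S) fun i => c i x • Y i x]

theorem span_eval_spanOn {q : Fin n → ℝ} (hq : q ∈ U) :
    Submodule.span ℝ {w | ∃ X ∈ spanOn U S, w = X q} =
      Submodule.span ℝ ((fun X : VF n => X q) '' S) := by
  apply le_antisymm <;> rw [Submodule.span_le]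
  · rintro _ ⟨X, ⟨m, c, Y, -, hY, hX⟩, rfl⟩
    rw [hX q hq]
    exact Submodule.sum_mem _ fun i _ => Submodule.smul_mem _ _ <|
      Submodule.subset_span ⟨Y i, hY i, rfl⟩
  · rintro _ ⟨X, hX, rfl⟩
    exact Submodule.subset_span ⟨X, subset_spanOn hX, rfl⟩

end SpanOn

section Bracket

variable {n : ℕ} {U : Set (Fin n → ℝ)} {R S T : Set (VF n)} {X Y : VF n}

theorem bracketSet_mono {A A₁ B B₁ : Set (VF n)} (hA : A ⊆ A₁) (hB : B ⊆ B₁) :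
    bracketSet A B ⊆ bracketSet A₁ B₁ := by
  rintro _ ⟨X, hX, Y, hY, rfl⟩
  exact ⟨X, hA hX, Y, hB hY, rfl⟩

theorem lieBracket_eq_vectorField_lieBracket (X Y : VF n) :
    lieBracket X Y = VectorField.lieBracket ℝ X Y := rfl

theorem lieBracket_eq_neg_swap (X Y : VF n) : lieBracket X Y = -lieBracket Y X :=
  funext fun _ => VectorField.lieBracket_swap

theorem lieBracket_mem_spanOn_of_left (hU : IsOpen U) (hS : ∀ X ∈ S, ContDiffOn ℝ (⊤ : ℕ∞) X U)
    (hSR : S ⊆ spanOn U R) (hY : ContDiffOn ℝ (⊤ : ℕ∞) Y U)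
    (hSY : ∀ X ∈ S, lieBracket X Y ∈ spanOn U R) (hX : X ∈ spanOn U S) :
    lieBracket X Y ∈ spanOn U R := by
  let p : VF n → Prop := fun V => ContDiffOn ℝ (⊤ : ℕ∞) V U ∧ lieBracket V Y ∈ spanOn U R
  suffices h : p X from h.2
  refine spanOn_induction ?congr ?zero ?add ?smul hX
  case congr =>
    rintro V W hVW ⟨hV, hVY⟩
    refine ⟨hV.congr hVW.symm, mem_spanOn_of_eqOn (fun x hx => ?_) hVY⟩
    exact (hVW.eventuallyEq_of_mem (hU.mem_nhds hx)).lieBracket_vectorField_eq .rfl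
  case zero =>
    refine ⟨contDiffOn_const, ?_⟩
    rw [lieBracket_eq_vectorField_lieBracket, VectorField.lieBracket_zero_left]
    exact zero_mem_spanOn
  case add =>
    rintro V W ⟨hV, hVY⟩ ⟨hW, hWY⟩
    refine ⟨hV.add hW, mem_spanOn_of_eqOn (fun x hx => ?_) (add_mem_spanOn hVY hWY)⟩
    exact (VectorField.lieBracket_add_left
      ((hV.differentiableOn (by simp)).differentiableAt (hU.mem_nhds hx))
      ((hW.differentiableOn (by simp)).differentiableAt (hU.mem_nhds hx))).symm
  case smul =>
    intro f hf V hV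
    have hDfY : ContDiffOn ℝ (⊤ : ℕ∞) (fun x => -fderiv ℝ f x (Y x)) U :=
      ((hf.fderiv_of_isOpen hU (by simp)).clm_apply hY).neg
    refine ⟨hf.smul (hS V hV), mem_spanOn_of_eqOn (fun x hx => ?_) <|
      add_mem_spanOn (smul_mem_spanOn hDfY (hSR hV)) (smul_mem_spanOn hf (hSY V hV))⟩
    exact (VectorField.lieBracket_smul_left
      ((hf.differentiableOn (by simp)).differentiableAt (hU.mem_nhds hx))
      (((hS V hV).differentiableOn (by simp)).differentiableAt (hU.mem_nhds hx))).symm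

theorem bracketSet_spanOn_subset (hU : IsOpen U) (hS : ∀ X ∈ S, ContDiffOn ℝ (⊤ : ℕ∞) X U)
    (hT : ∀ X ∈ T, ContDiffOn ℝ (⊤ : ℕ∞) X U) (hSR : S ⊆ spanOn U R) (hTR : T ⊆ spanOn U R)
    (hST : bracketSet S T ⊆ spanOn U R) :
    bracketSet (spanOn U S) (spanOn U T) ⊆ spanOn U R := by
  rintro _ ⟨X, hX, Y, hY, rfl⟩
  refine lieBracket_mem_spanOn_of_left hU hS hSR (contDiffOn_of_mem_spanOn hT hY)
    (fun V hV => ?_) hX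
  rw [lieBracket_eq_neg_swap]
  refine neg_mem_spanOn (lieBracket_mem_spanOn_of_left hU hT hTR (hS V hV) (fun W hW => ?_) hY)
  rw [lieBracket_eq_neg_swap]
  exact neg_mem_spanOn (hST ⟨V, hV, W, hW, rfl⟩)

theorem addOn_spanOn_bracketSet (hU : IsOpen U) (hS : ∀ X ∈ S, ContDiffOn ℝ (⊤ : ℕ∞) X U)
    (hTS : T ⊆ S) :
    addOn U (spanOn U S) (spanOn U (bracketSet (spanOn U S) (spanOn U T))) =
      spanOn U (S ∪ bracketSet S T) := by
  have hSR : S ⊆ spanOn U (S ∪ bracketSet S T) := Set.subset_union_left.trans subset_spanOn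
  rw [addOn_spanOn]
  apply Set.Subset.antisymm
  · refine spanOn_subset_spanOn (Set.union_subset hSR ?_)
    exact bracketSet_spanOn_subset hU hS (fun X hX => hS X (hTS hX)) hSR (hTS.trans hSR)
      (Set.subset_union_right.trans subset_spanOn)
  · exact spanOn_mono (Set.union_subset_union_right S (bracketSet_mono subset_spanOn subset_spanOn))

end Bracket

section ChainedFields

variable {n : ℕ}

theorem contDiff_chainedX1 (n : ℕ) : ContDiff ℝ (⊤ : ℕ∞) (chainedX1 n) := by
  refine contDiff_pi.2 fun i => ?_
  by_cases h : i.1 + 3 ≤ n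
  · simpa only [chainedX1, h, dite_true] using contDiff_apply ℝ ℝ _
  · simpa only [chainedX1, h, dite_false] using contDiff_const

theorem chainedX1_apply_last (hn : n - 1 < n) (z : Fin n → ℝ) :
    chainedX1 n z ⟨n - 1, hn⟩ = 1 := by
  rw [chainedX1, dif_neg (by simp only; omega), if_pos (by simp only; omega)]

theorem fderiv_chainedX1_apply (x v : Fin n → ℝ) (i : Fin n) :
    fderiv ℝ (chainedX1 n) x v i = if h : i.1 + 3 ≤ n then v ⟨i.1 + 1, by omega⟩ else 0 := by
  have hd : DifferentiableAt ℝ (chainedX1 n) x :=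
    (contDiff_chainedX1 n).contDiffAt.differentiableAt (by simp)
  have hcoord : fderiv ℝ (chainedX1 n) x v i = fderiv ℝ (fun z => chainedX1 n z i) x v := by
    rw [fderiv_apply hd i]; rfl
  rw [hcoord]
  by_cases h : i.1 + 3 ≤ n
  · simp only [chainedX1, h, dite_true, (hasFDerivAt_apply _ x).fderiv,
      ContinuousLinearMap.proj_apply]
  · simp [chainedX1, h]

theorem fderiv_constE (j : Fin n) (x : Fin n → ℝ) : fderiv ℝ (constE n j) x = 0 :=
  fderiv_const_apply _

theorem lieBracket_constE_constE (i j : Fin n) : lieBracket (constE n i) (constE n j) = 0 := by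
  ext x l
  simp [lieBracket, fderiv_constE]

theorem lieBracket_constE_chainedX1 (j : Fin n) (x : Fin n → ℝ) :
    lieBracket (constE n j) (chainedX1 n) x = fderiv ℝ (chainedX1 n) x (Pi.single j 1) := by
  simp [lieBracket, fderiv_constE, constE]

theorem lieBracket_constE_succ_chainedX1 {i j : Fin n} (hij : j.1 = i.1 + 1) (hj : j.1 + 2 ≤ n) :
    lieBracket (constE n j) (chainedX1 n) = constE n i := by
  ext x l
  rw [lieBracket_constE_chainedX1, fderiv_chainedX1_apply]
  simp only [constE, Pi.single_apply, Fin.ext_iff]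
  split_ifs <;> first | rfl | omega

theorem lieBracket_constE_zero_chainedX1 {j : Fin n} (hj : j.1 = 0) :
    lieBracket (constE n j) (chainedX1 n) = 0 := by
  ext x l
  rw [lieBracket_constE_chainedX1, fderiv_chainedX1_apply]
  simp [Fin.ext_iff, hj]

end ChainedFields

section ChainedGenerators

/-- The generators `X¹, E_{n-1}, …, E_{n-1-k}` (1-based indices) of the `k`-th distribution of
either flag. For `k > n - 2` the list of constant fields stops at `E_1`. -/
def chainedGenerators (n k : ℕ) : Set (VF n) :=
  {chainedX1 n} ∪ {X | ∃ j : Fin n, n ≤ j.1 + k + 2 ∧ j.1 + 2 ≤ n ∧ X = constE n j}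

variable {n : ℕ} {U : Set (Fin n → ℝ)}

theorem chainedX1_mem_chainedGenerators (n k : ℕ) : chainedX1 n ∈ chainedGenerators n k :=
  Or.inl rfl

theorem constE_mem_chainedGenerators {k : ℕ} {j : Fin n} (hkj : n ≤ j.1 + k + 2)
    (hj : j.1 + 2 ≤ n) : constE n j ∈ chainedGenerators n k :=
  Or.inr ⟨j, hkj, hj, rfl⟩

theorem contDiff_of_mem_chainedGenerators {k : ℕ} {X : VF n} (hX : X ∈ chainedGenerators n k) :
    ContDiff ℝ (⊤ : ℕ∞) X := by
  rcases hX with rfl | ⟨j, -, -, rfl⟩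
  exacts [contDiff_chainedX1 n, contDiff_const]

theorem chainedGenerators_mono (n : ℕ) : Monotone (chainedGenerators n) := by
  rintro k l hkl X (rfl | ⟨j, hkj, hj, rfl⟩)
  · exact chainedX1_mem_chainedGenerators n l
  · exact constE_mem_chainedGenerators (by omega) hj

theorem chainedGenerators_eq_insert_range {k : ℕ} (hk : k + 2 ≤ n) :
    chainedGenerators n k =
      insert (chainedX1 n) (Set.range fun m : Fin (k + 1) => constE n ⟨n - 2 - m.1, by omega⟩) := by
  apply Set.Subset.antisymm
  · rintro X (rfl | ⟨j, hkj, hj, rfl⟩)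
    · exact Set.mem_insert _ _
    · refine Or.inr ⟨⟨n - 2 - j.1, by omega⟩, congrArg (constE n) (Fin.ext ?_)⟩
      simp only
      omega
  · rintro X (rfl | ⟨m, rfl⟩)
    · exact chainedX1_mem_chainedGenerators n k
    · exact constE_mem_chainedGenerators (by simp only; omega) (by simp only; omega)

theorem chainedGenerators_zero (hn : 2 ≤ n) :
    chainedGenerators n 0 = {chainedX1 n, constE n ⟨n - 2, by omega⟩} := by
  rw [chainedGenerators_eq_insert_range hn]
  exact congrArg (insert (chainedX1 n)) (Set.range_unique (ι := Fin 1))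

theorem lieBracket_constE_chainedX1_mem_spanOn {k : ℕ} {j : Fin n} (hkj : n ≤ j.1 + k + 2)
    (hj : j.1 + 2 ≤ n) :
    lieBracket (constE n j) (chainedX1 n) ∈ spanOn U (chainedGenerators n (k + 1)) := by
  rcases Nat.eq_zero_or_pos j.1 with hj0 | hj0
  · rw [lieBracket_constE_zero_chainedX1 hj0]
    exact zero_mem_spanOn
  · rw [lieBracket_constE_succ_chainedX1 (i := ⟨j.1 - 1, by omega⟩) (by simp only; omega) hj]
    exact subset_spanOn (constE_mem_chainedGenerators (by simp only; omega) (by simp only; omega))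

theorem bracketSet_chainedGenerators_subset (n k : ℕ) (U : Set (Fin n → ℝ)) :
    bracketSet (chainedGenerators n k) (chainedGenerators n k) ⊆
      spanOn U (chainedGenerators n (k + 1)) := by
  rintro _ ⟨X, rfl | ⟨i, hki, hi, rfl⟩, Y, rfl | ⟨j, hkj, hj, rfl⟩, rfl⟩
  · rw [lieBracket_eq_vectorField_lieBracket, VectorField.lieBracket_self]
    exact zero_mem_spanOn
  · rw [lieBracket_eq_neg_swap]
    exact neg_mem_spanOn (lieBracket_constE_chainedX1_mem_spanOn hkj hj)
  · exact lieBracket_constE_chainedX1_mem_spanOn hki hi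
  · rw [lieBracket_constE_constE]
    exact zero_mem_spanOn

theorem chainedGenerators_succ_subset (n k : ℕ) :
    chainedGenerators n (k + 1) ⊆
      chainedGenerators n k ∪ bracketSet (chainedGenerators n k) (chainedGenerators n 0) := by
  rintro X (rfl | ⟨j, hkj, hj, rfl⟩)
  · exact Or.inl (chainedX1_mem_chainedGenerators n k)
  by_cases hkj_old : n ≤ j.1 + k + 2
  · exact Or.inl (constE_mem_chainedGenerators hkj_old hj)
  · refine Or.inr ⟨constE n ⟨j.1 + 1, by omega⟩, ?_, chainedX1 n,
      chainedX1_mem_chainedGenerators n 0,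
      (lieBracket_constE_succ_chainedX1 rfl (by simp only; omega)).symm⟩
    exact constE_mem_chainedGenerators (by simp only; omega) (by simp only; omega)

theorem addOn_spanOn_chainedGenerators (hU : IsOpen U) {k l : ℕ} (hlk : l ≤ k) :
    addOn U (spanOn U (chainedGenerators n k)) (spanOn U (bracketSet
      (spanOn U (chainedGenerators n k)) (spanOn U (chainedGenerators n l)))) =
      spanOn U (chainedGenerators n (k + 1)) := by
  have hmono := chainedGenerators_mono n
  rw [addOn_spanOn_bracketSet hU (fun X hX => (contDiff_of_mem_chainedGenerators hX).contDiffOn)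
    (hmono hlk)]
  apply Set.Subset.antisymm
  · refine spanOn_subset_spanOn (Set.union_subset ((hmono k.le_succ).trans subset_spanOn) ?_)
    exact (bracketSet_mono subset_rfl (hmono hlk)).trans
      (bracketSet_chainedGenerators_subset n k U)
  · exact spanOn_mono ((chainedGenerators_succ_subset n k).trans
      (Set.union_subset_union_right _ (bracketSet_mono subset_rfl (hmono l.zero_le))))

theorem lieFlag_chainedGenerators (hU : IsOpen U) (k : ℕ) :
    lieFlag U (spanOn U (chainedGenerators n 0)) k = spanOn U (chainedGenerators n k) := by
  induction k with
  | zero => rfl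
  | succ k ih => rw [lieFlag, ih, addOn_spanOn_chainedGenerators hU k.zero_le]

theorem derivedFlag_chainedGenerators (hU : IsOpen U) (k : ℕ) :
    derivedFlag U (spanOn U (chainedGenerators n 0)) k = spanOn U (chainedGenerators n k) := by
  induction k with
  | zero => rfl
  | succ k ih => rw [derivedFlag, ih, addOn_spanOn_chainedGenerators hU le_rfl]

end ChainedGenerators

section ChainedFrame

theorem linearIndependent_cons_single {K ι : Type*} [DivisionRing K] [DecidableEq ι] {k : ℕ}
    {f : Fin k → ι} (hf : Function.Injective f) {v : ι → K} {i : ι} (hi : ∀ m, i ≠ f m)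
    (hv : v i ≠ 0) :
    LinearIndependent K (Fin.cons v fun m => Pi.single (f m) 1 : Fin (k + 1) → ι → K) := by
  refine linearIndependent_finCons.2
    ⟨(Pi.linearIndependent_single_one ι K).comp f hf, fun hmem => hv ?_⟩
  have hker : Submodule.span K (Set.range fun m => Pi.single (f m) (1 : K)) ≤
      LinearMap.ker (LinearMap.proj i : (ι → K) →ₗ[K] K) := by
    rw [Submodule.span_le]
    rintro _ ⟨m, rfl⟩
    exact Pi.single_eq_of_ne (hi m) 1
  exact hker hmem

/-- The vectors `X¹(q), e_{n-1}, …, e_{n-1-k}` (1-based indices), in this order. -/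
def chainedFrame {n k : ℕ} (hk : k + 2 ≤ n) (q : Fin n → ℝ) : Fin (k + 2) → Fin n → ℝ :=
  fun m => if m.1 = 0 then chainedX1 n q else Pi.single ⟨n - 1 - m.1, by omega⟩ 1

variable {n k : ℕ}

theorem chainedFrame_eq_cons (hk : k + 2 ≤ n) (q : Fin n → ℝ) :
    chainedFrame hk q =
      Fin.cons (chainedX1 n q) fun m : Fin (k + 1) => Pi.single ⟨n - 2 - m.1, by omega⟩ 1 := by
  funext m
  refine Fin.cases rfl (fun m => ?_) m
  have hm : n - 1 - (m.1 + 1) = n - 2 - m.1 := by omega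
  simp [chainedFrame, hm]

theorem linearIndependent_chainedFrame (hk : k + 2 ≤ n) (q : Fin n → ℝ) :
    LinearIndependent ℝ (chainedFrame hk q) := by
  rw [chainedFrame_eq_cons]
  refine linearIndependent_cons_single (i := ⟨n - 1, by omega⟩) (fun m l hml => ?_) (fun m => ?_) ?_
  · simp only [Fin.mk.injEq] at hml
    omega
  · simp only [ne_eq, Fin.mk.injEq]
    omega
  · simp [chainedX1_apply_last]

theorem range_chainedFrame (hk : k + 2 ≤ n) (q : Fin n → ℝ) :
    Set.range (chainedFrame hk q) = (fun X : VF n => X q) '' chainedGenerators n k := by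
  rw [chainedFrame_eq_cons, Fin.range_cons, chainedGenerators_eq_insert_range hk,
    Set.image_insert_eq, ← Set.range_comp]
  rfl

theorem finrank_span_eval_chainedGenerators (hk : k + 2 ≤ n) {U : Set (Fin n → ℝ)}
    {q : Fin n → ℝ} (hq : q ∈ U) :
    Module.finrank ℝ (Submodule.span ℝ {w | ∃ X ∈ spanOn U (chainedGenerators n k), w = X q}) =
      2 + k := by
  rw [span_eval_spanOn hq, ← range_chainedFrame hk,
    finrank_span_eq_card (linearIndependent_chainedFrame hk q), Fintype.card_fin, add_comm]

end ChainedFrame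

/-- For the chained-form fields `X¹`, `X² = E_{n−1}` (1-based index,
0-based `n−2`), and `0 ≤ k ≤ n−2`:
`F_k = G_k = span_{C^∞(U)}{X¹, E_{n−1}, …, E_{n−1−k}}` (1-based indices, i.e. the constant
fields `e_j` for 0-based `n−2−k ≤ j ≤ n−2`), and at every `q ∈ U` the vectors
`X¹(q), e_{n−1}, …, e_{n−1−k}` are linearly independent, so `dim F_k(q) = dim G_k(q) = 2+k`. -/
theorem flags_of_chained_fields (n : ℕ) (hn : 3 ≤ n) (U : Set (Fin n → ℝ)) (hU : IsOpen U) :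
    ∀ k : ℕ, k + 2 ≤ n →
      lieFlag U (spanOn U {chainedX1 n, constE n ⟨n - 2, by omega⟩}) k =
        spanOn U ({chainedX1 n} ∪
          { X | ∃ j : Fin n, n ≤ j.1 + k + 2 ∧ j.1 + 2 ≤ n ∧ X = constE n j }) ∧
      derivedFlag U (spanOn U {chainedX1 n, constE n ⟨n - 2, by omega⟩}) k =
        spanOn U ({chainedX1 n} ∪
          { X | ∃ j : Fin n, n ≤ j.1 + k + 2 ∧ j.1 + 2 ≤ n ∧ X = constE n j }) ∧
      ∀ q ∈ U,
        LinearIndependent ℝ (fun m : Fin (k + 2) =>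
          if m.1 = 0 then chainedX1 n q
          else Pi.single (⟨n - 1 - m.1, by omega⟩ : Fin n) (1 : ℝ)) ∧
        Module.finrank ℝ ↥(Submodule.span ℝ
          { w | ∃ X ∈ lieFlag U (spanOn U {chainedX1 n, constE n ⟨n - 2, by omega⟩}) k,
              w = X q }) = 2 + k ∧
        Module.finrank ℝ ↥(Submodule.span ℝ
          { w | ∃ X ∈ derivedFlag U (spanOn U {chainedX1 n, constE n ⟨n - 2, by omega⟩}) k,
              w = X q }) = 2 + k := by
  intro k hk
  rw [← chainedGenerators_zero (by omega), lieFlag_chainedGenerators hU,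
    derivedFlag_chainedGenerators hU]
  exact ⟨rfl, rfl, fun q hq => ⟨linearIndependent_chainedFrame hk q,
    finrank_span_eval_chainedGenerators hk hq, finrank_span_eval_chainedGenerators hk hq⟩⟩

end
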